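/- Let q ≥ 1 and s with 1 ≤ s ≤ q be integers, and let r > 0 and ε > 0. Then there exists a finite set F ⊆ ℝ^q of cardinality at most (q choose s) · (1 + 2r/ε)^s such that for every W ∈ ℝ^q with ‖W‖₀ ≤ s and ‖W‖_∞ ≤ r there is V ∈ F with ‖W − V‖_∞ ≤ ε; moreover F can be chosen so that every V ∈ F satisfies ‖V‖₀ ≤ s. -/

import Mathlib

/-- The number of nonzero coordinates (`ℓ⁰` "norm") of a vector in `ℝ^q`. -/
noncomputable def l0norm {q : ℕ} (W : Fin q → ℝ) : ℕ :=
  (Finset.univ.filter fun j => W j ≠ 0).card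

/-- Covering of the set of `s`-sparse vectors with `‖·‖_∞ ≤ r` by at most
`(q choose s)(1 + 2r/ε)^s` points at resolution `ε` in `‖·‖_∞`, with the net itself
consisting of `s`-sparse vectors. -/
theorem stmt_18 (q s : ℕ) (hq : 1 ≤ q) (hs1 : 1 ≤ s) (hsq : s ≤ q) (r ε : ℝ)
    (hr : 0 < r) (hε : 0 < ε) :
    ∃ F : Finset (Fin q → ℝ),
      (F.card : ℝ) ≤ (q.choose s : ℝ) * (1 + 2 * r / ε) ^ s ∧
      (∀ W : Fin q → ℝ, l0norm W ≤ s → (∀ j, |W j| ≤ r) →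
        ∃ V ∈ F, ∀ j, |W j - V j| ≤ ε) ∧
      (∀ V ∈ F, l0norm V ≤ s) := by
  classical
  obtain ⟨G, hGc, hG⟩ : ∃ G : Finset ℝ, (G.card : ℝ) ≤ 1 + 2 * r / ε ∧
      ∀ x : ℝ, |x| ≤ r → ∃ y ∈ G, |x - y| ≤ ε := by
    refine ⟨(Finset.range (⌊2 * r / ε⌋₊ + 1)).image (fun k : ℕ => -r + k * ε), ?_, ?_⟩
    · have h1 : (((Finset.range (⌊2 * r / ε⌋₊ + 1)).image
          (fun k : ℕ => -r + k * ε)).card : ℝ) ≤ ((⌊2 * r / ε⌋₊ + 1 : ℕ) : ℝ) := by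
        exact_mod_cast Finset.card_image_le.trans (by simp)
      have h2 := Nat.floor_le (show 0 ≤ 2 * r / ε by positivity)
      push_cast at h1
      linarith
    · intro x hx
      obtain ⟨hx1, hx2⟩ := abs_le.mp hx
      have h0 : 0 ≤ (x + r) / ε := div_nonneg (by linarith) hε.le
      refine ⟨-r + (⌊(x + r) / ε⌋₊ : ℕ) * ε, Finset.mem_image.mpr
        ⟨⌊(x + r) / ε⌋₊, ?_, rfl⟩, ?_⟩
      · rw [Finset.mem_range, Nat.lt_succ_iff]
        apply Nat.floor_le_floor
        gcongr
        linarith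
      · have h1 := Nat.floor_le h0
        have h2 := (Nat.lt_floor_add_one ((x + r) / ε)).le
        rw [le_div_iff₀ hε] at h1
        rw [div_le_iff₀ hε] at h2
        rw [abs_le]
        constructor <;> linarith
  let P : Finset (Fin q) → Finset (Fin q → ℝ) := fun S =>
    Fintype.piFinset (fun j => if j ∈ S then G else {0})
  have hP : ∀ S, (P S).card = G.card ^ S.card := by
    intro S
    simp only [P, Fintype.card_piFinset, apply_ite Finset.card, Finset.card_singleton]
    rw [Finset.prod_ite_mem]
    simp
  refine ⟨(Finset.powersetCard s Finset.univ).biUnion P, ?_, ?_, ?_⟩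
  · have h : ((Finset.powersetCard s Finset.univ).biUnion P).card ≤ q.choose s * G.card ^ s := by
      refine (Finset.card_biUnion_le_card_mul _ _ (G.card ^ s) ?_).trans (by simp)
      intro S hS
      rw [hP, (Finset.mem_powersetCard.mp hS).2]
    calc (_ : ℝ) ≤ ((q.choose s * G.card ^ s : ℕ) : ℝ) := by exact_mod_cast h
      _ = (q.choose s : ℝ) * (G.card : ℝ) ^ s := by push_cast; rfl
      _ ≤ _ := by gcongr
  · intro W hW hWr
    obtain ⟨S, hS1, hS2⟩ := Finset.exists_superset_card_eq hW (by simpa using hsq)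
    choose y hy1 hy2 using fun j => hG (W j) (hWr j)
    refine ⟨fun j => if j ∈ S then y j else 0, Finset.mem_biUnion.mpr ⟨S, ?_, ?_⟩, ?_⟩
    · simp [Finset.mem_powersetCard, hS2]
    · simp only [P, Fintype.mem_piFinset]
      intro j
      by_cases hj : j ∈ S <;> simp [hj, hy1]
    · intro j
      by_cases hj : j ∈ S
      · simpa [hj] using hy2 j
      · have : W j = 0 := by
          by_contra h
          exact hj (hS1 (by simp [h]))
        simp [hj, this, hε.le]
  · intro V hV
    obtain ⟨S, hS, hVS⟩ := Finset.mem_biUnion.mp hV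
    rw [← (Finset.mem_powersetCard.mp hS).2]
    apply Finset.card_le_card
    intro j hj
    by_contra h
    have := Fintype.mem_piFinset.mp hVS j
    simp [h] at this
    simp [this] at hj
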